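/- (Anytime correctness of the set-based refinement loop.) Let M be a hierarchical MDP with optimal local subpolicies and target states T, with nontrivial partition indices 𝕀. Let I_1, …, I_k be sets covering 𝕀, and for each l let lbres_{I_l}, ubres_{I_l} be sound bounds (lbres_{I_l} ≤ res_i ≤ ubres_{I_l} pointwise for every i ∈ I_l). Setting, for each i ∈ 𝕀, lbres_i := lbres_{I_l} and ubres_i := ubres_{I_l} for some l with i ∈ I_l, the resulting region R' = Reg(lbres_1, …, ubres_n) is suitable, and therefore any lb ≤ min_{u ∈ R'} maxER_{umacro(M)[u]}(◊T) and ub ≥ max_{u ∈ R'} maxER_{umacro(M)[u]}(◊T) satisfy lb ≤ maxER_M(◊T) ≤ ub. -/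

import Mathlib

/-!
Membership of the exact valuation `ustar` in the region is immediate from soundness of the chosen
bounds.  The bounds on the value then follow from `HMDP.maxER_ustar`: at `ustar` the macro-MDP has
the value of the hierarchical MDP restricted to the local policies, which by assumption is the
value of the hierarchical MDP itself.  The image of the region is bounded below by `0`, because
maximal expected rewards are nonnegative even at valuations with negative entries.

The heart is `HMDP.ER_macro_eq`, which compares the two Markov chains of matching policies.
Expected rewards are least nonnegative solutions of the Bellman equation, so it is enough to turn a
solution of each chain into a supersolution of the other one.  A solution `V` of the hierarchical
chain gives one for the macro chain by assigning to each partition the value of `V` at the entry;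
a solution `U` of the macro chain is extended into a partition as the subMDP reward plus the
`U`-values of the successors, weighted by the subMDP reachability probabilities.  Both agree with
the original solution at trivial states and entry states, the only states entered from outside
their partition.  Finiteness of the hierarchical expected rewards comes from almost sure
reachability of the target (`MDP.erN_bounded`), and the other chains inherit it from there.
-/

open scoped BigOperators
open scoped Classical

/-- A (finite) Markov decision process: states `S`, actions `A`, an initial state,
transition probabilities, state rewards, and a set of target states. -/
structure MDP (S A : Type) [Fintype S] [Fintype A] where
  init : S
  P : S → A → S → ℝ
  r : S → ℝ
  target : Set S

namespace MDP

variable {S A : Type} [Fintype S] [Fintype A]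

/-- Well-formedness of an MDP: transition probabilities are nonnegative, every
action row sums to `0` or `1`, and rewards are nonnegative. -/
def IsMDP (M : MDP S A) : Prop :=
  (∀ s a t, 0 ≤ M.P s a t) ∧
  (∀ s a, (∑ t, M.P s a t) = 0 ∨ (∑ t, M.P s a t) = 1) ∧
  (∀ s, 0 ≤ M.r s)

/-- Probability that the Markov chain with kernel `step`, started in `s`,
first visits the set `T` at time `n`. -/
noncomputable def hitAt (step : S → S → ℝ) (T : Set S) : ℕ → S → ℝ
  | 0, s => if s ∈ T then 1 else 0
  | n + 1, s => if s ∈ T then 0 else ∑ t, step s t * hitAt step T n t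

/-- Probability of eventually reaching `T` from `s` in the Markov chain `step`. -/
noncomputable def reach (step : S → S → ℝ) (T : Set S) (s : S) : ℝ :=
  ∑' n, hitAt step T n s

/-- `n`-step truncation of the expected reward accumulated strictly before reaching `T`. -/
noncomputable def erN (step : S → S → ℝ) (rew : S → ℝ) (T : Set S) : ℕ → S → ℝ
  | 0, _ => 0
  | n + 1, s => if s ∈ T then 0 else rew s + ∑ t, step s t * erN step rew T n t

/-- Expected reward accumulated until reaching `T` (supremum of the truncations). -/
noncomputable def expRew (step : S → S → ℝ) (rew : S → ℝ) (T : Set S) (s : S) : ℝ :=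
  ⨆ n, erN step rew T n s

/-- The kernel of the Markov chain induced by a memoryless policy `σ`. -/
def stepOf (M : MDP S A) (σ : S → A) : S → S → ℝ := fun s t => M.P s (σ s) t

/-- A memoryless policy selects an enabled action in every state. -/
def IsPolicy (M : MDP S A) (σ : S → A) : Prop := ∀ s, (∑ t, M.P s (σ s) t) ≠ 0

/-- `Pr_{M[σ]}(s → ◊U)`. -/
noncomputable def PrR (M : MDP S A) (σ : S → A) (U : Set S) (s : S) : ℝ :=
  reach (M.stepOf σ) U s

/-- `ER_{M[σ]}(s → ◊T)` where `T` is the target set of `M`. -/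
noncomputable def ER (M : MDP S A) (σ : S → A) (s : S) : ℝ :=
  expRew (M.stepOf σ) M.r M.target s

/-- `maxER_M(s → ◊T)`: the maximal expected reward over memoryless policies. -/
noncomputable def maxER (M : MDP S A) (s : S) : ℝ :=
  ⨆ σ : { σ : S → A // M.IsPolicy σ }, M.ER σ.1 s

/-- `maxER_M(◊T)` from the initial state. -/
noncomputable def value (M : MDP S A) : ℝ := M.maxER M.init

/-- `M[τ]` for a partial policy `τ : S ⇸ A`: where `τ` is defined, only the chosen
action remains enabled; elsewhere `M` is unchanged. -/
noncomputable def restrict (M : MDP S A) (τ : S → Option A) : MDP S A :=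
  { M with
    P := fun s a t =>
      match τ s with
      | some b => if a = b then M.P s a t else 0
      | none => M.P s a t }

end MDP
/-- A hierarchical MDP: an MDP together with (pairwise disjoint, nontrivial)
partitions `part i`, their entry states, and an enumeration `suc i` of the
(at most `Y`) successor states of each partition.  States outside every
`part i` are the trivial partitions. -/
structure HMDP (S A ι : Type) (Y : ℕ) [Fintype S] [Fintype A] [Fintype ι]
    extends MDP S A where
  part : ι → Finset S
  entry : ι → S
  suc : ι → Fin Y → S

namespace HMDP

variable {S A ι : Type} {Y : ℕ} [Fintype S] [Fintype A] [Fintype ι]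

/-- The successor states `succ(S_i) \ S_i` of partition `i`. -/
def succSet (H : HMDP S A ι Y) (i : ι) : Set S :=
  { t | t ∉ H.part i ∧ ∃ s ∈ H.part i, ∃ a, H.P s a t ≠ 0 }

/-- The hierarchical-MDP conditions: the partitions are pairwise disjoint and
nontrivial; `entry i` belongs to `part i` and is the initial state or has a
predecessor outside `part i`; every other state of `part i` is not the initial
state and has all its predecessors inside `part i`; `suc i` injectively
enumerates (a superset of) the successor states of `part i`, all of them lying
outside `part i`; and target states are trivial states. -/
def IsHMDP (H : HMDP S A ι Y) : Prop :=
  (∀ i j, i ≠ j → Disjoint (H.part i) (H.part j)) ∧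
  (∀ i, 2 ≤ (H.part i).card) ∧
  (∀ i, H.entry i ∈ H.part i) ∧
  (∀ i, H.entry i = H.init ∨ ∃ s a, s ∉ H.part i ∧ H.P s a (H.entry i) ≠ 0) ∧
  (∀ i, ∀ s ∈ H.part i, s ≠ H.entry i →
    s ≠ H.init ∧ ∀ s' a, H.P s' a s ≠ 0 → s' ∈ H.part i) ∧
  (∀ i, Function.Injective (H.suc i) ∧ (∀ j, H.suc i j ∉ H.part i) ∧
    ∀ t ∈ H.succSet i, ∃ j, H.suc i j = t) ∧
  (∀ i, ∀ s ∈ H.part i, s ∉ H.target)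

/-- The subMDP `M_i` of partition `i`: its states are the states of `H` plus a
fresh bottom state `none`; inside `part i` the original transitions and rewards
are kept, every state outside `part i` moves with probability 1 to the
(absorbing) bottom state via the fresh action `none` and has reward `0`;
the target is the bottom state. -/
noncomputable def subMDP (H : HMDP S A ι Y) (i : ι) : MDP (Option S) (Option A) where
  init := some (H.entry i)
  P := fun s a t =>
    match s, a, t with
    | some s, some a, some t => if s ∈ H.part i then H.P s a t else 0
    | some s, none, none => if s ∈ H.part i then 0 else 1
    | none, none, none => 1
    | _, _, _ => 0
  r := fun s =>
    match s with
    | some s => if s ∈ H.part i then H.r s else 0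
    | none => 0
  target := {none}

/-- `res_i(j)` for `j < Y`: the probability, under the policy `σs i` of the
subMDP `M_i`, of reaching the `j`-th successor state of partition `i`. -/
noncomputable def resP (H : HMDP S A ι Y) (σs : ι → Option S → Option A)
    (i : ι) (j : Fin Y) : ℝ :=
  (H.subMDP i).PrR (σs i) {some (H.suc i j)} (some (H.entry i))

/-- `res_i(Y) = maxER_{M_i}(◊{⊥})`. -/
noncomputable def resE (H : HMDP S A ι Y) (i : ι) : ℝ :=
  (H.subMDP i).maxER (some (H.entry i))

/-- The result vector `res_i ∈ ℝ^{Y+1}` of subMDP `M_i` (Def. 7). -/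
noncomputable def res (H : HMDP S A ι Y) (σs : ι → Option S → Option A) (i : ι) :
    Fin (Y + 1) → ℝ :=
  fun j => if h : (j : ℕ) < Y then H.resP σs i ⟨j, h⟩ else H.resE i

/-- The family `σs` consists of (locally) optimal policies of the subMDPs. -/
def LocallyOptimal (H : HMDP S A ι Y) (σs : ι → Option S → Option A) : Prop :=
  ∀ i, (H.subMDP i).IsPolicy (σs i) ∧
    (H.subMDP i).ER (σs i) (some (H.entry i)) = (H.subMDP i).maxER (some (H.entry i))

/-- The partial policy `⊔_𝕀 σ_i` on `H` induced by subMDP policies `σs`. -/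
noncomputable def liftPolicy (H : HMDP S A ι Y) (σs : ι → Option S → Option A) :
    S → Option A :=
  fun s => if h : ∃ i, s ∈ H.part i then σs h.choose (some s) else none

/-- `H` has optimal local subpolicies: applying any family of locally optimal
subMDP policies as a partial policy preserves the maximal expected reward. -/
def HasOptimalLocalSubpolicies (H : HMDP S A ι Y) : Prop :=
  ∀ σs, H.LocallyOptimal σs →
    (H.toMDP.restrict (H.liftPolicy σs)).maxER H.init = H.toMDP.maxER H.init

/-- The macro-MDP of `H` (Def. 6), induced by fixed optimal subMDP policies `σs`:
at states of nontrivial partitions the transition probabilities are the subMDP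
reachability probabilities of the successor states and the reward is the
maximal expected subMDP reward; trivial states keep their transitions and
rewards.  (Non-entry states of nontrivial partitions are unreachable.) -/
noncomputable def macroMDP (H : HMDP S A ι Y) (σs : ι → Option S → Option A) :
    MDP S A where
  init := H.init
  P := fun s a t =>
    if h : ∃ i, s ∈ H.part i then
      ∑ j, if t = H.suc h.choose j then H.resP σs h.choose j else 0
    else H.P s a t
  r := fun s => if h : ∃ i, s ∈ H.part i then H.resE h.choose else H.r s
  target := H.target

end HMDP
/-- The parameters of the uncertain macro-MDP: `p i j` is the transition
probability from `entry i` to the `j`-th successor of partition `i`, and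
`q i` is the reward collected in partition `i`. -/
inductive Param (ι : Type) (Y : ℕ) where
  | p : ι → Fin Y → Param ι Y
  | q : ι → Param ι Y

/-- The (rectangular) region `[[lo, hi]]` of parameter valuations. -/
def region {ι : Type} {Y : ℕ} (lo hi : Param ι Y → ℝ) : Set (Param ι Y → ℝ) :=
  { u | lo ≤ u ∧ u ≤ hi }

/-- The parameter valuation induced by a family of vectors in `ℝ^{Y+1}`
(the first `Y` entries bound the `p`-parameters, the last one the `q`-parameter). -/
def toVal {ι : Type} {Y : ℕ} (b : ι → Fin (Y + 1) → ℝ) : Param ι Y → ℝ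
  | .p i j => b i j.castSucc
  | .q i => b i (Fin.last Y)

namespace HMDP

variable {S A ι : Type} {Y : ℕ} [Fintype S] [Fintype A] [Fintype ι]

/-- The instantiation `umacro(M)[u]` of the uncertain macro-MDP of `H` at the
parameter valuation `u`. -/
noncomputable def umacroInst (H : HMDP S A ι Y) (u : Param ι Y → ℝ) : MDP S A where
  init := H.init
  P := fun s a t =>
    if h : ∃ i, s ∈ H.part i then
      ∑ j, if t = H.suc h.choose j then u (.p h.choose j) else 0
    else H.P s a t
  r := fun s => if h : ∃ i, s ∈ H.part i then u (.q h.choose) else H.r s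
  target := H.target

/-- The valuation `u*` with `u*(p_{i,j}) = res_i(j)` and `u*(q_i) = res_i(Y)`. -/
noncomputable def ustar (H : HMDP S A ι Y) (σs : ι → Option S → Option A) :
    Param ι Y → ℝ
  | .p i j => H.resP σs i j
  | .q i => H.resE i

/-- A set of parameter valuations is suitable if it contains `u*`. -/
def Suitable (H : HMDP S A ι Y) (σs : ι → Option S → Option A)
    (R : Set (Param ι Y → ℝ)) : Prop :=
  H.ustar σs ∈ R

end HMDP

/-! ### Finite nonnegative kernels -/

namespace MDP

open Filter Topology

section Kernel

variable {S : Type} [Fintype S] {K : S → S → ℝ} {rew : S → ℝ} {T : Set S}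

theorem erN_nonneg (hK : ∀ s t, 0 ≤ K s t) (hr : ∀ s, 0 ≤ rew s) :
    ∀ n s, 0 ≤ erN K rew T n s := by
  intro n
  induction n with
  | zero => intro s; simp [erN]
  | succ n ih =>
    intro s
    rw [erN]
    split_ifs
    · exact le_rfl
    · exact add_nonneg (hr s) (Finset.sum_nonneg fun t _ => mul_nonneg (hK s t) (ih t))

theorem erN_le_succ (hK : ∀ s t, 0 ≤ K s t) (hr : ∀ s, 0 ≤ rew s) :
    ∀ n s, erN K rew T n s ≤ erN K rew T (n + 1) s := by
  intro n
  induction n with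
  | zero => intro s; exact erN_nonneg hK hr 1 s
  | succ n ih =>
    intro s
    rw [erN, erN]
    split_ifs
    · exact le_rfl
    · have := Finset.sum_le_sum fun t (_ : t ∈ Finset.univ) =>
        mul_le_mul_of_nonneg_left (ih t) (hK s t)
      linarith

/-- A nonnegative supersolution of the Bellman equation dominates every truncation of the
expected reward. -/
theorem erN_le_of_super (hK : ∀ s t, 0 ≤ K s t) {W : S → ℝ} (hW0 : ∀ s, 0 ≤ W s)
    (hW : ∀ s, s ∉ T → rew s + ∑ t, K s t * W t ≤ W s) :
    ∀ n s, erN K rew T n s ≤ W s := by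
  intro n
  induction n with
  | zero => intro s; simpa [erN] using hW0 s
  | succ n ih =>
    intro s
    rw [erN]
    split_ifs with hs
    · exact hW0 s
    · have := Finset.sum_le_sum fun t (_ : t ∈ Finset.univ) =>
        mul_le_mul_of_nonneg_left (ih t) (hK s t)
      linarith [hW s hs]

/-- The expected reward is nonnegative for arbitrary real kernels and rewards: its truncation at
step `0` vanishes, and an unbounded supremum is `0` by convention. -/
theorem expRew_nonneg (s : S) : 0 ≤ expRew K rew T s := by
  unfold expRew
  by_cases h : BddAbove (Set.range fun n => erN K rew T n s)
  · exact le_ciSup_of_le h 0 (by simp [erN])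
  · exact (Real.iSup_of_not_bddAbove h).ge

theorem expRew_le {W : S → ℝ} (h : ∀ n s, erN K rew T n s ≤ W s) (s : S) :
    expRew K rew T s ≤ W s :=
  ciSup_le fun n => h n s

theorem tendsto_erN (hK : ∀ s t, 0 ≤ K s t) (hr : ∀ s, 0 ≤ rew s) {W : S → ℝ}
    (h : ∀ n s, erN K rew T n s ≤ W s) (s : S) :
    Tendsto (fun n => erN K rew T n s) atTop (𝓝 (expRew K rew T s)) :=
  tendsto_atTop_ciSup (monotone_nat_of_le_succ fun n => erN_le_succ hK hr n s)
    ⟨W s, by rintro _ ⟨n, rfl⟩; exact h n s⟩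

theorem expRew_of_mem {s : S} (hs : s ∈ T) : expRew K rew T s = 0 := by
  have : ∀ n, erN K rew T n s = 0 := by
    rintro (_ | n) <;> simp [erN, hs]
  simp [expRew, this]

/-- The Bellman equation, for a finite expected reward. -/
theorem expRew_fix (hK : ∀ s t, 0 ≤ K s t) (hr : ∀ s, 0 ≤ rew s) {W : S → ℝ}
    (h : ∀ n s, erN K rew T n s ≤ W s) {s : S} (hs : s ∉ T) :
    expRew K rew T s = rew s + ∑ t, K s t * expRew K rew T t := by
  have h1 := (tendsto_add_atTop_iff_nat 1).2 (tendsto_erN hK hr h s)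
  have h2 : Tendsto (fun n => rew s + ∑ t, K s t * erN K rew T n t) atTop
      (𝓝 (rew s + ∑ t, K s t * expRew K rew T t)) :=
    tendsto_const_nhds.add (tendsto_finsetSum _ fun t _ =>
      (tendsto_erN hK hr h t).const_mul _)
  refine tendsto_nhds_unique h1 (h2.congr fun n => ?_)
  rw [erN, if_neg hs]

/-- Probability of visiting `T` within the first `n` time points. -/
noncomputable def hitN (K : S → S → ℝ) (T : Set S) (n : ℕ) (s : S) : ℝ :=
  ∑ m ∈ Finset.range n, hitAt K T m s

theorem hitN_zero (s : S) : hitN K T 0 s = 0 := by simp [hitN]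

theorem hitN_succ (n : ℕ) (s : S) :
    hitN K T (n + 1) s = if s ∈ T then 1 else ∑ t, K s t * hitN K T n t := by
  unfold hitN
  rw [Finset.sum_range_succ']
  split_ifs with hs
  · simp [hitAt, hs]
  · simp only [hitAt, hs, if_false, add_zero, Finset.mul_sum]
    exact Finset.sum_comm

theorem hitAt_nonneg (hK : ∀ s t, 0 ≤ K s t) : ∀ n s, 0 ≤ hitAt K T n s := by
  intro n
  induction n with
  | zero => intro s; rw [hitAt]; split_ifs <;> norm_num
  | succ n ih =>
    intro s
    rw [hitAt]
    split_ifs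
    · exact le_rfl
    · exact Finset.sum_nonneg fun t _ => mul_nonneg (hK s t) (ih t)

theorem hitN_nonneg (hK : ∀ s t, 0 ≤ K s t) (n : ℕ) (s : S) : 0 ≤ hitN K T n s :=
  Finset.sum_nonneg fun m _ => hitAt_nonneg hK m s

theorem hitN_le_one (hK : ∀ s t, 0 ≤ K s t) (hK1 : ∀ s, ∑ t, K s t = 1) :
    ∀ n s, hitN K T n s ≤ 1 := by
  intro n
  induction n with
  | zero => intro s; simp [hitN]
  | succ n ih =>
    intro s
    rw [hitN_succ]
    split_ifs
    · exact le_rfl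
    · calc ∑ t, K s t * hitN K T n t ≤ ∑ t, K s t * 1 :=
            Finset.sum_le_sum fun t _ => mul_le_mul_of_nonneg_left (ih t) (hK s t)
        _ = 1 := by simp [hK1 s]

theorem tendsto_hitN (hK : ∀ s t, 0 ≤ K s t) (hK1 : ∀ s, ∑ t, K s t = 1) (s : S) :
    Tendsto (fun n => hitN K T n s) atTop (𝓝 (reach K T s)) :=
  (summable_of_sum_range_le (fun m => hitAt_nonneg hK m s)
    (fun n => hitN_le_one hK hK1 n s)).hasSum.tendsto_sum_nat

theorem reach_nonneg (hK : ∀ s t, 0 ≤ K s t) (s : S) : 0 ≤ reach K T s :=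
  tsum_nonneg fun m => hitAt_nonneg hK m s

theorem reach_of_mem (hK : ∀ s t, 0 ≤ K s t) (hK1 : ∀ s, ∑ t, K s t = 1) {s : S}
    (hs : s ∈ T) : reach K T s = 1 :=
  tendsto_nhds_unique ((tendsto_add_atTop_iff_nat 1).2 (tendsto_hitN hK hK1 s))
    (tendsto_const_nhds.congr fun n => by rw [hitN_succ, if_pos hs])

theorem reach_fix (hK : ∀ s t, 0 ≤ K s t) (hK1 : ∀ s, ∑ t, K s t = 1) {s : S}
    (hs : s ∉ T) : reach K T s = ∑ t, K s t * reach K T t := by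
  have h1 := (tendsto_add_atTop_iff_nat 1).2 (tendsto_hitN (T := T) hK hK1 s)
  have h2 : Tendsto (fun n => ∑ t, K s t * hitN K T n t) atTop
      (𝓝 (∑ t, K s t * reach K T t)) :=
    tendsto_finsetSum _ fun t _ => (tendsto_hitN hK hK1 t).const_mul _
  refine tendsto_nhds_unique h1 (h2.congr fun n => ?_)
  rw [hitN_succ, if_neg hs]

/-- If `T` is reached almost surely from everywhere, the expected rewards are finite.  With `N`
such that `T` is hit before time `N` with probability at least `1/2` from every state, a large
multiple of the expected time, truncated at `N`, spent before hitting `T` is a supersolution. -/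
theorem erN_bounded (hK : ∀ s t, 0 ≤ K s t) (hK1 : ∀ s, ∑ t, K s t = 1)
    (hr : ∀ s, 0 ≤ rew s) (hT : ∀ s, reach K T s = 1) :
    ∃ W : S → ℝ, ∀ n s, erN K rew T n s ≤ W s := by
  have hev : ∀ᶠ n in atTop, ∀ s, (1 / 2 : ℝ) < hitN K T n s := by
    rw [eventually_all]
    intro s
    refine (tendsto_hitN hK hK1 s).eventually (lt_mem_nhds ?_)
    rw [hT s]; norm_num
  obtain ⟨N, hN⟩ := hev.exists
  set R : ℝ := ∑ s, rew s with hR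
  have hR0 : 0 ≤ R := Finset.sum_nonneg fun s _ => hr s
  have hrR : ∀ s, rew s ≤ R := fun s =>
    Finset.single_le_sum (f := rew) (fun t _ => hr t) (Finset.mem_univ s)
  refine ⟨fun s => 2 * R * ∑ m ∈ Finset.range N, (1 - hitN K T m s),
    erN_le_of_super hK (fun s => ?_) (fun s hs => ?_)⟩
  · exact mul_nonneg (by linarith) (Finset.sum_nonneg fun m _ =>
      sub_nonneg.2 (hitN_le_one hK hK1 m s))
  · have h1 : ∑ t, K s t * (2 * R * ∑ m ∈ Finset.range N, (1 - hitN K T m t))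
        = 2 * R * ∑ m ∈ Finset.range N, (1 - hitN K T (m + 1) s) := by
      have : ∀ m, 1 - hitN K T (m + 1) s = ∑ t, K s t * (1 - hitN K T m t) := by
        intro m
        simp only [mul_sub, mul_one, Finset.sum_sub_distrib, hK1 s]
        rw [hitN_succ, if_neg hs]
      simp only [this, Finset.mul_sum]
      rw [Finset.sum_comm]
      exact Finset.sum_congr rfl fun m _ => Finset.sum_congr rfl fun t _ => by ring
    have h2 := Finset.sum_range_succ (fun m => (1 : ℝ) - hitN K T m s) N
    rw [Finset.sum_range_succ'] at h2
    rw [h1]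
    have h3 := hN s
    rw [hitN_zero] at h2
    have h4 : ∑ m ∈ Finset.range N, (1 - hitN K T (m + 1) s)
        ≤ ∑ m ∈ Finset.range N, (1 - hitN K T m s) - 1 / 2 := by linarith
    nlinarith [hrR s, mul_le_mul_of_nonneg_left h4 (by linarith : 0 ≤ 2 * R)]

end Kernel

variable {S A : Type} [Fintype S] [Fintype A]

theorem IsMDP.sum_stepOf {M : MDP S A} (hM : M.IsMDP) {σ : S → A} (hσ : M.IsPolicy σ) (s : S) :
    ∑ t, M.stepOf σ s t = 1 :=
  (hM.2.1 s (σ s)).resolve_left (hσ s)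

theorem maxER_nonneg (M : MDP S A) (s : S) : 0 ≤ M.maxER s :=
  Real.iSup_nonneg fun _ => expRew_nonneg s

end MDP

namespace HMDP

open Filter Topology MDP

variable {S A ι : Type} {Y : ℕ} [Fintype S] [Fintype A] [Fintype ι]

/-! ### The chain of a subMDP under a policy -/

theorem subMDP_isMDP {H : HMDP S A ι Y} (hM : H.toMDP.IsMDP) (i : ι) : (H.subMDP i).IsMDP := by
  refine ⟨?_, ?_, ?_⟩
  · rintro (_ | s) (_ | a) (_ | t) <;> simp only [subMDP] <;> try split_ifs
    all_goals first | exact hM.1 _ _ _ | norm_num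
  · rintro (_ | s) (_ | a) <;> simp only [subMDP, Fintype.sum_option]
    · simp
    · simp
    · split_ifs <;> simp
    · split_ifs
      · simpa using hM.2.1 s a
      · simp
  · rintro (_ | s) <;> simp only [subMDP]
    · exact le_rfl
    · split_ifs
      · exact hM.2.2 s
      · exact le_rfl

section Sub

variable {H : HMDP S A ι Y} {i : ι} {σ : Option S → Option A}

theorem policy_in (hσ : (H.subMDP i).IsPolicy σ) {s : S} (hs : s ∈ H.part i) :
    ∃ a, σ (some s) = some a ∧ ∑ t, H.P s a t ≠ 0 := by
  have h := hσ (some s)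
  rcases hc : σ (some s) with _ | a
  · simp [hc, subMDP, hs, Fintype.sum_option] at h
  · exact ⟨a, rfl, by simpa [hc, subMDP, hs, Fintype.sum_option] using h⟩

theorem sub_sum_in {s : S} (hs : s ∈ H.part i) {a : A} (ha : σ (some s) = some a)
    (f : Option S → ℝ) :
    ∑ x, (H.subMDP i).stepOf σ (some s) x * f x = ∑ t, H.P s a t * f (some t) := by
  simp [Fintype.sum_option, stepOf, subMDP, ha, hs]

theorem sub_sum_out (hσ : (H.subMDP i).IsPolicy σ) {s : S} (hs : s ∉ H.part i)
    (f : Option S → ℝ) : ∑ x, (H.subMDP i).stepOf σ (some s) x * f x = f none := by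
  have h := hσ (some s)
  rcases hc : σ (some s) with _ | a
  · simp [Fintype.sum_option, stepOf, subMDP, hc, hs]
  · simp [hc, subMDP, hs, Fintype.sum_option] at h

theorem sub_sum_none (hσ : (H.subMDP i).IsPolicy σ) (f : Option S → ℝ) :
    ∑ x, (H.subMDP i).stepOf σ none x * f x = f none := by
  have h := hσ none
  rcases hc : σ none with _ | a
  · simp [Fintype.sum_option, stepOf, subMDP, hc]
  · simp [hc, subMDP] at h

theorem sub_erN_out (hσ : (H.subMDP i).IsPolicy σ) {s : S} (hs : s ∉ H.part i) (n : ℕ) :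
    erN ((H.subMDP i).stepOf σ) (H.subMDP i).r {none} n (some s) = 0 := by
  cases n with
  | zero => rfl
  | succ n =>
    rw [erN, if_neg (by simp), sub_sum_out hσ hs]
    cases n <;> simp [erN, subMDP, hs]

theorem sub_hitN_none (hσ : (H.subMDP i).IsPolicy σ) (v : S) (n : ℕ) :
    hitN ((H.subMDP i).stepOf σ) {some v} n none = 0 := by
  induction n with
  | zero => exact hitN_zero _
  | succ n ih => rw [hitN_succ, if_neg (by simp), sub_sum_none hσ, ih]

theorem sub_hitN_out (hσ : (H.subMDP i).IsPolicy σ) {s : S} (hs : s ∉ H.part i) (v : S) (n : ℕ) :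
    hitN ((H.subMDP i).stepOf σ) {some v} (n + 1) (some s) = if s = v then 1 else 0 := by
  rw [hitN_succ, sub_sum_out hσ hs, sub_hitN_none hσ]
  simp

theorem sub_reach_out (hM : H.toMDP.IsMDP) (hσ : (H.subMDP i).IsPolicy σ) {s : S}
    (hs : s ∉ H.part i) (v : S) :
    (H.subMDP i).PrR σ {some v} (some s) = if s = v then 1 else 0 :=
  tendsto_nhds_unique ((tendsto_add_atTop_iff_nat 1).2
    (tendsto_hitN (fun s => (subMDP_isMDP hM i).1 s _) ((subMDP_isMDP hM i).sum_stepOf hσ) _))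
    (tendsto_const_nhds.congr fun n => (sub_hitN_out hσ hs v n).symm)

theorem sum_ite_suc (hinj : Function.Injective (H.suc i)) (j₀ : Fin Y) (G : S → ℝ) :
    ∑ j, (if H.suc i j₀ = H.suc i j then (1 : ℝ) else 0) * G (H.suc i j) = G (H.suc i j₀) := by
  simp [hinj.eq_iff]

/-- The bottom state of a subMDP is only reached through the successors of the partition, so the
successor probabilities sum to at least `1`. -/
theorem one_le_sum_reach (hM : H.toMDP.IsMDP) (hH : H.IsHMDP) (hσ : (H.subMDP i).IsPolicy σ)
    (hT : ∀ s, (H.subMDP i).PrR σ {none} s = 1) {s : S} (hs : s ∈ H.part i) :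
    1 ≤ ∑ j, (H.subMDP i).PrR σ {some (H.suc i j)} (some s) := by
  have hK : ∀ s t, 0 ≤ (H.subMDP i).stepOf σ s t := fun s => (subMDP_isMDP hM i).1 s _
  have hK1 := (subMDP_isMDP hM i).sum_stepOf hσ
  obtain ⟨hinj, hout, hsuc⟩ := hH.2.2.2.2.2.1 i
  have key : ∀ n, ∀ s ∈ H.part i, hitN ((H.subMDP i).stepOf σ) {none} n (some s) ≤
      ∑ j, (H.subMDP i).PrR σ {some (H.suc i j)} (some s) := by
    intro n
    induction n with
    | zero =>
      intro s _
      rw [hitN_zero]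
      exact Finset.sum_nonneg fun j _ => reach_nonneg hK _
    | succ n ih =>
      intro s hs
      obtain ⟨a, ha, -⟩ := policy_in hσ hs
      rw [hitN_succ, if_neg (by simp), sub_sum_in hs ha]
      have h1 : ∀ j, (H.subMDP i).PrR σ {some (H.suc i j)} (some s) =
          ∑ t, H.P s a t * (H.subMDP i).PrR σ {some (H.suc i j)} (some t) := by
        intro j
        have hne : s ≠ H.suc i j := fun h => hout j (h ▸ hs)
        exact (reach_fix hK hK1 (by simpa using hne)).trans (sub_sum_in hs ha _)
      simp only [h1]
      rw [Finset.sum_comm]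
      refine Finset.sum_le_sum fun t _ => ?_
      rw [← Finset.mul_sum]
      by_cases hp : H.P s a t = 0
      · simp [hp]
      refine mul_le_mul_of_nonneg_left ?_ (hM.1 s a t)
      by_cases ht : t ∈ H.part i
      · exact ih t ht
      · obtain ⟨j₀, rfl⟩ := hsuc t ⟨ht, s, hs, a, hp⟩
        have h2 := sum_ite_suc hinj j₀ (fun _ => 1)
        simp only [mul_one] at h2
        simp only [sub_reach_out hM hσ ht, h2]
        exact hitN_le_one hK hK1 _ _
  have h := le_of_tendsto (tendsto_hitN hK hK1 (some s)) (Eventually.of_forall fun n => key n s hs)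
  have h3 := hT (some s)
  rw [PrR] at h3
  rwa [h3] at h

end Sub

/-! ### Comparison of the macro-MDP with the hierarchical MDP -/

theorem choose_eq {H : HMDP S A ι Y} (hH : H.IsHMDP) {s : S} {i : ι} (hs : s ∈ H.part i)
    (h : ∃ i, s ∈ H.part i) : h.choose = i := by
  by_contra hne
  exact Finset.disjoint_left.1 (hH.1 _ _ hne) h.choose_spec hs

section Compare

variable {H : HMDP S A ι Y} {σs : ι → Option S → Option A} {τ : S → A}

/-- States whose macro-MDP value carries meaning: trivial states and entry states. -/
def Good (H : HMDP S A ι Y) (t : S) : Prop := ∀ i, t ∈ H.part i → t = H.entry i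

theorem good_of_step (hH : H.IsHMDP) {s t : S} {a : A} (hp : H.P s a t ≠ 0)
    (h : ∀ i, t ∈ H.part i → s ∉ H.part i) : H.Good t := by
  intro i ht
  by_contra hne
  exact h i ht ((hH.2.2.2.2.1 i t ht hne).2 s a hp)

theorem good_init (hH : H.IsHMDP) : H.Good H.init := by
  intro i ht
  by_contra hne
  exact (hH.2.2.2.2.1 i _ ht hne).1 rfl

theorem good_of_exit (hH : H.IsHMDP) {s t : S} {a : A} {i : ι} (hs : s ∈ H.part i)
    (ht : t ∉ H.part i) (hp : H.P s a t ≠ 0) : H.Good t := by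
  refine good_of_step hH hp fun i' ht' hs' => ?_
  have : i' = i := by
    by_contra hne
    exact Finset.disjoint_left.1 (hH.1 _ _ hne) hs' hs
  exact ht (this ▸ ht')

/-- Replacing the value of each state of a partition by the value of its entry. -/
noncomputable def collapse (H : HMDP S A ι Y) (V : S → ℝ) (s : S) : ℝ :=
  if h : ∃ i, s ∈ H.part i then V (H.entry h.choose) else V s

theorem collapse_in (hH : H.IsHMDP) (V : S → ℝ) {s : S} {i : ι} (hs : s ∈ H.part i) :
    H.collapse V s = V (H.entry i) := by
  have h : ∃ i, s ∈ H.part i := ⟨i, hs⟩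
  rw [collapse, dif_pos h, choose_eq hH hs h]

theorem collapse_good (hH : H.IsHMDP) (V : S → ℝ) {s : S} (hs : H.Good s) :
    H.collapse V s = V s := by
  by_cases h : ∃ i, s ∈ H.part i
  · obtain ⟨i, hi⟩ := h
    rw [collapse_in hH V hi, ← hs i hi]
  · rw [collapse, dif_neg h]

/-- Values in the hierarchical MDP rebuilt from macro values `U`: inside partition `i`, the
expected subMDP reward plus the `U`-values of the successors, weighted by the subMDP reachability
probabilities. -/
noncomputable def expand (H : HMDP S A ι Y) (σs : ι → Option S → Option A) (U : S → ℝ) (s : S) :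
    ℝ :=
  if h : ∃ i, s ∈ H.part i then
    (H.subMDP h.choose).ER (σs h.choose) (some s) +
      ∑ j, (H.subMDP h.choose).PrR (σs h.choose) {some (H.suc h.choose j)} (some s) *
        U (H.suc h.choose j)
  else U s

theorem expand_in (hH : H.IsHMDP) (U : S → ℝ) {s : S} {i : ι} (hs : s ∈ H.part i) :
    H.expand σs U s = (H.subMDP i).ER (σs i) (some s) +
      ∑ j, (H.subMDP i).PrR (σs i) {some (H.suc i j)} (some s) * U (H.suc i j) := by
  have h : ∃ i, s ∈ H.part i := ⟨i, hs⟩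
  rw [expand, dif_pos h, choose_eq hH hs h]

theorem macro_sum_in (hH : H.IsHMDP) {s : S} {i : ι} (hs : s ∈ H.part i) (a : A) (f : S → ℝ) :
    ∑ t, (H.umacroInst (H.ustar σs)).P s a t * f t
      = ∑ j, H.resP σs i j * f (H.suc i j) := by
  have h : ∃ i, s ∈ H.part i := ⟨i, hs⟩
  simp only [umacroInst, dif_pos h, choose_eq hH hs h, Finset.sum_mul]
  rw [Finset.sum_comm]
  simp [ustar]

theorem macro_P_out {s : S} (hs : ¬ ∃ i, s ∈ H.part i) (u : Param ι Y → ℝ) :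
    (H.umacroInst u).P s = H.P s := by
  funext a t
  simp only [umacroInst, dif_neg hs]

theorem macro_r_out {s : S} (hs : ¬ ∃ i, s ∈ H.part i) (u : Param ι Y → ℝ) :
    (H.umacroInst u).r s = H.r s := by
  simp only [umacroInst, dif_neg hs]

theorem macro_r_in (hH : H.IsHMDP) {s : S} {i : ι} (hs : s ∈ H.part i) :
    (H.umacroInst (H.ustar σs)).r s = H.resE i := by
  have h : ∃ i, s ∈ H.part i := ⟨i, hs⟩
  simp only [umacroInst, dif_pos h, choose_eq hH hs h, ustar]

/-- A policy `τ` of `H` that follows the local policies `σs` inside the partitions has the same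
expected reward from the initial state as any macro policy `μ` that agrees with `τ` on the trivial
states. -/
theorem ER_macro_eq (hM : H.toMDP.IsMDP) (hH : H.IsHMDP) (hσs : H.LocallyOptimal σs)
    (hτ : H.toMDP.IsPolicy τ) (hT : ∀ s, H.toMDP.PrR τ H.target s = 1)
    (hin : ∀ i, ∀ s ∈ H.part i, σs i (some s) = some (τ s))
    {μ : S → A} (hμ : ∀ s, (¬ ∃ i, s ∈ H.part i) → μ s = τ s) :
    (H.umacroInst (H.ustar σs)).ER μ H.init = H.toMDP.ER τ H.init := by
  have hk : ∀ s t, 0 ≤ H.toMDP.stepOf τ s t := fun s => hM.1 s _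
  have hr := hM.2.2
  obtain ⟨W, hW⟩ := erN_bounded hk (hM.sum_stepOf hτ) hr hT
  have hK : ∀ i s t, 0 ≤ (H.subMDP i).stepOf (σs i) s t :=
    fun i s => (subMDP_isMDP hM i).1 s _
  have hK1 := fun i => (subMDP_isMDP hM i).sum_stepOf (hσs i).1
  have hKr := fun i => (subMDP_isMDP hM i).2.2
  have hresP : ∀ i j, 0 ≤ H.resP σs i j := fun i j => reach_nonneg (hK i) _
  have htar := hH.2.2.2.2.2.2
  have hentry := hH.2.2.1
  have hm : ∀ s t, 0 ≤ (H.umacroInst (H.ustar σs)).stepOf μ s t := by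
    intro s t
    simp only [stepOf, umacroInst]
    split_ifs with h
    · refine Finset.sum_nonneg fun j _ => ?_
      split_ifs
      · exact hresP _ _
      · exact le_rfl
    · exact hM.1 _ _ _
  have hmr : ∀ s, 0 ≤ (H.umacroInst (H.ustar σs)).r s := by
    intro s
    simp only [umacroInst]
    split_ifs with h
    · exact maxER_nonneg _ _
    · exact hr s
  set V : S → ℝ := fun s => H.toMDP.ER τ s with hV
  have hV0 : ∀ s, 0 ≤ V s := fun s => expRew_nonneg s
  have hVfix : ∀ s, s ∉ H.target → V s = H.r s + ∑ t, H.P s (τ s) t * V t :=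
    fun s hs => expRew_fix hk hr hW hs
  have hc0 : ∀ s, 0 ≤ H.collapse V s := by
    intro s; rw [collapse]; split_ifs <;> exact hV0 _
  have hsub : ∀ i n, ∀ s ∈ H.part i,
      erN ((H.subMDP i).stepOf (σs i)) (H.subMDP i).r {none} n (some s) +
        ∑ j, hitN ((H.subMDP i).stepOf (σs i)) {some (H.suc i j)} n (some s) *
          H.collapse V (H.suc i j) ≤ V s := by
    intro i n
    obtain ⟨hinj, hout, hsuc⟩ := hH.2.2.2.2.2.1 i
    induction n with
    | zero => intro s _; simpa [erN, hitN_zero] using hV0 s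
    | succ n ih =>
      intro s hs
      have h1 : ∀ j, hitN ((H.subMDP i).stepOf (σs i)) {some (H.suc i j)} (n + 1) (some s) =
          ∑ t, H.P s (τ s) t *
            hitN ((H.subMDP i).stepOf (σs i)) {some (H.suc i j)} n (some t) := by
        intro j
        have hne : s ≠ H.suc i j := fun h => hout j (h ▸ hs)
        rw [hitN_succ, if_neg (by simpa using hne), sub_sum_in hs (hin i s hs)]
      rw [erN, if_neg (by simp), sub_sum_in hs (hin i s hs), hVfix s (htar i s hs)]
      simp only [h1, Finset.sum_mul]
      rw [Finset.sum_comm, add_assoc, ← Finset.sum_add_distrib]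
      have hrs : (H.subMDP i).r (some s) = H.r s := by simp [subMDP, hs]
      rw [hrs]
      refine add_le_add_right (Finset.sum_le_sum fun t _ => ?_) _
      simp only [mul_assoc]
      rw [← Finset.mul_sum, ← mul_add]
      by_cases hp : H.P s (τ s) t = 0
      · simp [hp]
      refine mul_le_mul_of_nonneg_left ?_ (hM.1 _ _ _)
      by_cases ht : t ∈ H.part i
      · exact ih t ht
      · rw [sub_erN_out (hσs i).1 ht, zero_add, ← collapse_good hH V (good_of_exit hH hs ht hp)]
        obtain ⟨j₀, rfl⟩ := hsuc t ⟨ht, s, hs, _, hp⟩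
        cases n with
        | zero => simpa [hitN_zero] using hc0 _
        | succ n =>
          simp only [sub_hitN_out (hσs i).1 ht]
          exact (sum_ite_suc hinj j₀ (H.collapse V)).le
  have hbsub : ∀ i, ∃ W' : Option S → ℝ, ∀ n s,
      erN ((H.subMDP i).stepOf (σs i)) (H.subMDP i).r {none} n s ≤ W' s := by
    intro i
    refine ⟨fun x => x.elim 0 V, fun n x => ?_⟩
    rcases x with _ | s
    · cases n <;> simp [erN]
    · by_cases hs : s ∈ H.part i
      · have h0 : 0 ≤ ∑ j, hitN ((H.subMDP i).stepOf (σs i)) {some (H.suc i j)} n (some s) *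
          H.collapse V (H.suc i j) :=
          Finset.sum_nonneg fun j _ => mul_nonneg (hitN_nonneg (hK i) _ _) (hc0 _)
        have := hsub i n s hs
        simp only [Option.elim]
        linarith
      · rw [sub_erN_out (hσs i).1 hs]
        exact hV0 s
  have hres : ∀ i, (H.subMDP i).ER (σs i) (some (H.entry i)) = H.resE i := fun i => (hσs i).2
  -- `collapse V` is a supersolution of the macro chain.
  have hmW : ∀ n s, erN ((H.umacroInst (H.ustar σs)).stepOf μ) (H.umacroInst (H.ustar σs)).r
      H.target n s ≤ H.collapse V s := by
    refine erN_le_of_super hm hc0 fun s hs => ?_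
    by_cases h : ∃ i, s ∈ H.part i
    · obtain ⟨i, hi⟩ := h
      simp only [stepOf]
      rw [macro_sum_in hH hi, macro_r_in hH hi, collapse_in hH V hi, ← hres i]
      obtain ⟨W', hW'⟩ := hbsub i
      exact le_of_tendsto ((tendsto_erN (hK i) (hKr i) hW' _).add
        (tendsto_finsetSum _ fun j _ =>
          (tendsto_hitN (hK i) (hK1 i) _).mul_const (H.collapse V (H.suc i j))))
        (Eventually.of_forall fun n => hsub i n _ (hentry i))
    · simp only [stepOf]
      rw [macro_P_out h, macro_r_out h, hμ s h, collapse, dif_neg h, hVfix s hs]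
      refine (add_right_inj _).2 (Finset.sum_congr rfl fun t _ => ?_) |>.le
      by_cases hp : H.P s (τ s) t = 0
      · simp [hp]
      · rw [collapse_good hH V (good_of_step hH hp fun i _ hs' => h ⟨i, hs'⟩)]
  set U : S → ℝ := fun s => (H.umacroInst (H.ustar σs)).ER μ s with hU
  have hU0 : ∀ s, 0 ≤ U s := fun s => expRew_nonneg s
  have hUfix : ∀ s, s ∉ H.target → U s = (H.umacroInst (H.ustar σs)).r s +
      ∑ t, (H.umacroInst (H.ustar σs)).P s (μ s) t * U t :=
    fun s hs => expRew_fix hm hmr hmW hs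
  have hE0 : ∀ s, 0 ≤ H.expand σs U s := by
    intro s
    rw [expand]
    split_ifs
    · exact add_nonneg (expRew_nonneg _) (Finset.sum_nonneg fun j _ =>
        mul_nonneg (reach_nonneg (hK _) _) (hU0 _))
    · exact hU0 s
  have hEgood : ∀ s, H.Good s → H.expand σs U s = U s := by
    intro s hs
    by_cases h : ∃ i, s ∈ H.part i
    · obtain ⟨i, hi⟩ := h
      rw [expand_in hH U hi, hUfix s (htar i s hi), macro_sum_in hH hi, macro_r_in hH hi,
        hs i hi, hres i]
      rfl
    · rw [expand, dif_neg h]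
  -- `expand U` is a supersolution of the chain of `τ` in the hierarchical MDP.
  have hVE : ∀ s, V s ≤ H.expand σs U s := by
    refine expRew_le (erN_le_of_super hk hE0 fun s hs => ?_)
    simp only [stepOf]
    by_cases h : ∃ i, s ∈ H.part i
    · obtain ⟨i, hi⟩ := h
      obtain ⟨hinj, hout, hsuc⟩ := hH.2.2.2.2.2.1 i
      obtain ⟨W', hW'⟩ := hbsub i
      have h1 : ∀ j, (H.subMDP i).PrR (σs i) {some (H.suc i j)} (some s) =
          ∑ t, H.P s (τ s) t * (H.subMDP i).PrR (σs i) {some (H.suc i j)} (some t) := by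
        intro j
        have hne : s ≠ H.suc i j := fun h => hout j (h ▸ hi)
        exact (reach_fix (hK i) (hK1 i) (by simpa using hne)).trans
          (sub_sum_in hi (hin i s hi) _)
      have h2 : (H.subMDP i).ER (σs i) (some s) =
          H.r s + ∑ t, H.P s (τ s) t * (H.subMDP i).ER (σs i) (some t) := by
        have h3 := expRew_fix (hK i) (hKr i) hW' (s := some s) (by simp)
        rw [sub_sum_in hi (hin i s hi)] at h3
        have hrs : (H.subMDP i).r (some s) = H.r s := by simp [subMDP, hi]
        rw [hrs] at h3
        exact h3
      rw [expand_in hH U hi, h2]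
      simp only [h1, Finset.sum_mul]
      rw [Finset.sum_comm, add_assoc, ← Finset.sum_add_distrib]
      refine (add_right_inj _).2 (Finset.sum_congr rfl fun t _ => ?_) |>.le
      simp only [mul_assoc]
      rw [← Finset.mul_sum, ← mul_add]
      by_cases hp : H.P s (τ s) t = 0
      · simp [hp]
      congr 1
      by_cases ht : t ∈ H.part i
      · exact expand_in hH U ht
      · rw [hEgood t (good_of_exit hH hi ht hp)]
        obtain ⟨j₀, rfl⟩ := hsuc t ⟨ht, s, hi, _, hp⟩
        have h4 : (H.subMDP i).ER (σs i) (some (H.suc i j₀)) = 0 := by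
          have : ∀ n, erN ((H.subMDP i).stepOf (σs i)) (H.subMDP i).r (H.subMDP i).target n
              (some (H.suc i j₀)) = 0 := fun n => sub_erN_out (hσs i).1 ht n
          simp [ER, expRew, this]
        simp only [sub_reach_out hM (hσs i).1 ht, h4, zero_add]
        exact (sum_ite_suc hinj j₀ U).symm
    · rw [expand, dif_neg h, hUfix s hs, macro_P_out h, macro_r_out h, hμ s h]
      refine (add_right_inj _).2 (Finset.sum_congr rfl fun t _ => ?_) |>.le
      by_cases hp : H.P s (τ s) t = 0
      · simp [hp]
      · rw [hEgood t (good_of_step hH hp fun i _ hs' => h ⟨i, hs'⟩)]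
  have hg := good_init hH
  refine le_antisymm ?_ ?_
  · exact (expRew_le hmW H.init).trans (collapse_good hH V hg).le
  · exact (hVE H.init).trans (hEgood _ hg).le

end Compare

/-- At the valuation `ustar`, the uncertain macro-MDP has the value of the hierarchical MDP
restricted to the local policies: their policies are matched by agreement on trivial states. -/
theorem maxER_ustar {H : HMDP S A ι Y} (hM : H.toMDP.IsMDP) (hH : H.IsHMDP)
    (hT : ∀ σ, H.toMDP.IsPolicy σ → ∀ s, H.toMDP.PrR σ H.target s = 1)
    (hTsub : ∀ i σ, (H.subMDP i).IsPolicy σ → ∀ s, (H.subMDP i).PrR σ {none} s = 1)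
    {σs : ι → Option S → Option A} (hσs : H.LocallyOptimal σs) :
    (H.umacroInst (H.ustar σs)).maxER H.init =
      (H.toMDP.restrict (H.liftPolicy σs)).maxER H.init := by
  have hlift : ∀ i, ∀ s ∈ H.part i, H.liftPolicy σs s = σs i (some s) := by
    intro i s hs
    have h : ∃ i, s ∈ H.part i := ⟨i, hs⟩
    rw [liftPolicy, dif_pos h, choose_eq hH hs h]
  have hlift' : ∀ s, (¬ ∃ i, s ∈ H.part i) → H.liftPolicy σs s = none := by
    intro s h
    rw [liftPolicy, dif_neg h]
  have hPin : ∀ i, ∀ s ∈ H.part i, ∀ b, σs i (some s) = some b → ∀ a t,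
      (H.toMDP.restrict (H.liftPolicy σs)).P s a t = if a = b then H.P s a t else 0 := by
    intro i s hs b hb a t
    simp only [restrict, hlift i s hs, hb]
  have hPout : ∀ s, (¬ ∃ i, s ∈ H.part i) → ∀ a t,
      (H.toMDP.restrict (H.liftPolicy σs)).P s a t = H.P s a t := by
    intro s h a t
    simp only [restrict, hlift' s h]
  have hin : ∀ τ, (H.toMDP.restrict (H.liftPolicy σs)).IsPolicy τ →
      ∀ i, ∀ s ∈ H.part i, σs i (some s) = some (τ s) := by
    intro τ hτ i s hs
    obtain ⟨b, hb, -⟩ := policy_in (hσs i).1 hs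
    by_contra hne
    refine hτ s (Finset.sum_eq_zero fun t _ => ?_)
    rw [hPin i s hs b hb, if_neg]
    rintro rfl
    exact hne hb
  have hstep : ∀ τ, (∀ i, ∀ s ∈ H.part i, σs i (some s) = some (τ s)) →
      (H.toMDP.restrict (H.liftPolicy σs)).stepOf τ = H.toMDP.stepOf τ := by
    intro τ h
    funext s t
    by_cases hs : ∃ i, s ∈ H.part i
    · obtain ⟨i, hi⟩ := hs
      simp only [stepOf]
      rw [hPin i s hi _ (h i s hi), if_pos rfl]
    · exact hPout s hs _ _
  have hpol : ∀ τ, (∀ i, ∀ s ∈ H.part i, σs i (some s) = some (τ s)) →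
      ((H.toMDP.restrict (H.liftPolicy σs)).IsPolicy τ ↔ H.toMDP.IsPolicy τ) := by
    intro τ h
    have := hstep τ h
    simp only [IsPolicy]
    refine forall_congr' fun s => ?_
    have h2 : ∀ t, (H.toMDP.restrict (H.liftPolicy σs)).P s (τ s) t = H.P s (τ s) t :=
      fun t => congrFun (congrFun this s) t
    simp only [h2]
  have hER : ∀ τ, (∀ i, ∀ s ∈ H.part i, σs i (some s) = some (τ s)) →
      (H.toMDP.restrict (H.liftPolicy σs)).ER τ H.init = H.toMDP.ER τ H.init := by
    intro τ h
    simp only [ER]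
    rw [hstep τ h]
    rfl
  have hrange : Set.range (fun μ : { σ // (H.umacroInst (H.ustar σs)).IsPolicy σ } =>
      (H.umacroInst (H.ustar σs)).ER μ.1 H.init) =
      Set.range (fun τ : { σ // (H.toMDP.restrict (H.liftPolicy σs)).IsPolicy σ } =>
        (H.toMDP.restrict (H.liftPolicy σs)).ER τ.1 H.init) := by
    ext x
    constructor
    · rintro ⟨⟨μ, hμ⟩, rfl⟩
      -- Override the macro policy by the local policies inside the partitions.
      set τ : S → A := fun s => (H.liftPolicy σs s).getD (μ s) with hτdef
      have hτin : ∀ i, ∀ s ∈ H.part i, σs i (some s) = some (τ s) := by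
        intro i s hs
        obtain ⟨b, hb, -⟩ := policy_in (hσs i).1 hs
        simp [hτdef, hlift i s hs, hb]
      have hτout : ∀ s, (¬ ∃ i, s ∈ H.part i) → μ s = τ s := by
        intro s hs
        simp [hτdef, hlift' s hs]
      have hτ : H.toMDP.IsPolicy τ := by
        intro s
        by_cases hs : ∃ i, s ∈ H.part i
        · obtain ⟨i, hi⟩ := hs
          obtain ⟨b, hb, hb'⟩ := policy_in (hσs i).1 hi
          have : b = τ s := Option.some.inj (hb.symm.trans (hτin i s hi))
          exact this ▸ hb'
        · have := hμ s
          rw [macro_P_out hs, hτout s hs] at this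
          exact this
      exact ⟨⟨τ, (hpol τ hτin).2 hτ⟩,
        (hER τ hτin).trans (ER_macro_eq hM hH hσs hτ (hT τ hτ) hτin hτout).symm⟩
    · rintro ⟨⟨τ, hτ⟩, rfl⟩
      have hτin := hin τ hτ
      have hτ' := (hpol τ hτin).1 hτ
      refine ⟨⟨τ, fun s => ?_⟩,
        (ER_macro_eq hM hH hσs hτ' (hT τ hτ') hτin fun _ _ => rfl).trans (hER τ hτin).symm⟩
      by_cases hs : ∃ i, s ∈ H.part i
      · obtain ⟨i, hi⟩ := hs
        have h1 := macro_sum_in (σs := σs) hH hi (τ s) (fun _ => 1)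
        simp only [mul_one] at h1
        rw [h1]
        have h2 : 1 ≤ ∑ j, H.resP σs i j :=
          one_le_sum_reach hM hH (hσs i).1 (hTsub i _ (hσs i).1) (hH.2.2.1 i)
        linarith
      · rw [macro_P_out hs]
        exact hτ' s
  simp only [maxER, iSup]
  rw [hrange]

end HMDP

/-- **Anytime correctness of the set-based refinement loop.**  Let `M` be a
hierarchical MDP with optimal local subpolicies and target states `T`, with
nontrivial partition indices `𝕀`.  Let `I_1, …, I_k` be sets covering `𝕀` and
for each `l` let `lbs l`, `ubs l` be sound bounds for all `i ∈ I_l`.  Setting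
`lbres_i := lbs (pick i)` and `ubres_i := ubs (pick i)` for some `pick i` with
`i ∈ I_{pick i}`, the resulting rectangular region
`R' = Reg(lbres_1, …, ubres_n)` is suitable, and therefore any
`lb ≤ min_{u ∈ R'} maxER_{umacro(M)[u]}(◊T)` and
`ub ≥ max_{u ∈ R'} maxER_{umacro(M)[u]}(◊T)` satisfy
`lb ≤ maxER_M(◊T) ≤ ub`. -/
theorem anytime_set_refinement_correct
    {S A ι : Type} {Y : ℕ} [Fintype S] [Fintype A] [Fintype ι]
    (H : HMDP S A ι Y) (hM : H.toMDP.IsMDP) (hH : H.IsHMDP)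
    (hT : ∀ σ, H.toMDP.IsPolicy σ → ∀ s, H.toMDP.PrR σ H.target s = 1)
    (hTsub : ∀ i σ, (H.subMDP i).IsPolicy σ → ∀ s, (H.subMDP i).PrR σ {none} s = 1)
    (hopt : H.HasOptimalLocalSubpolicies)
    (σs : ι → Option S → Option A) (hσs : H.LocallyOptimal σs)
    (k : ℕ) (Is : Fin k → Finset ι) (hcover : ∀ i : ι, ∃ l, i ∈ Is l)
    (lbs ubs : Fin k → Fin (Y + 1) → ℝ)
    (hsound : ∀ l, ∀ i ∈ Is l, ∀ j, lbs l j ≤ H.res σs i j ∧ H.res σs i j ≤ ubs l j)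
    (pick : ι → Fin k) (hpick : ∀ i, i ∈ Is (pick i))
    (lbres ubres : ι → Fin (Y + 1) → ℝ)
    (hlbres : ∀ i, lbres i = lbs (pick i)) (hubres : ∀ i, ubres i = ubs (pick i))
    (hbdd : BddAbove ((fun u => (H.umacroInst u).maxER H.init) ''
      region (toVal lbres) (toVal ubres)))
    (lb ub : ℝ)
    (hlb : lb ≤ sInf ((fun u => (H.umacroInst u).maxER H.init) ''
      region (toVal lbres) (toVal ubres)))
    (hub : sSup ((fun u => (H.umacroInst u).maxER H.init) ''
      region (toVal lbres) (toVal ubres)) ≤ ub) :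
    H.Suitable σs (region (toVal lbres) (toVal ubres)) ∧
      lb ≤ H.toMDP.maxER H.init ∧ H.toMDP.maxER H.init ≤ ub := by
  have hsuit : H.Suitable σs (region (toVal lbres) (toVal ubres)) := by
    have h := fun i j => hsound (pick i) i (hpick i) j
    refine ⟨?_, ?_⟩
    · rintro (⟨i, j⟩ | i)
      · have := (h i j.castSucc).1
        simpa [toVal, HMDP.ustar, HMDP.res, hlbres] using this
      · have := (h i (Fin.last Y)).1
        simpa [toVal, HMDP.ustar, HMDP.res, hlbres] using this
    · rintro (⟨i, j⟩ | i)
      · have := (h i j.castSucc).2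
        simpa [toVal, HMDP.ustar, HMDP.res, hubres] using this
      · have := (h i (Fin.last Y)).2
        simpa [toVal, HMDP.ustar, HMDP.res, hubres] using this
  have hmem : H.toMDP.maxER H.init ∈ (fun u => (H.umacroInst u).maxER H.init) ''
      region (toVal lbres) (toVal ubres) :=
    ⟨H.ustar σs, hsuit, (HMDP.maxER_ustar hM hH hT hTsub hσs).trans (hopt σs hσs)⟩
  refine ⟨hsuit, hlb.trans (csInf_le ⟨0, ?_⟩ hmem), (le_csSup hbdd hmem).trans hub⟩
  rintro _ ⟨u, -, rfl⟩
  exact MDP.maxER_nonneg _ _
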